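/- Let G be a chain graph with chain components 𝒯 and let ≺ be a strict total order of 𝒯 consistent with G. A strictly positive joint probability mass function p obeys the multivariate regression Markov property for G if and only if for every T ∈ 𝒯 and every nonempty A ⊆ T the conditional multivariate logistic contrasts of p_{A|pre(T)} satisfy: (i) if A is connected, η^{(A)}(i*_A | i_{pre(T)}) depends on i_{pre(T)} only through the subvector i_{pa_G(A)} (equivalently, η^{(A)}(i*_A | i_{pre(T)}) = Σ_{b ⊆ pa_G(A)} β^{(A)}_b(i*_A, i_b) for baseline-coded functions β^{(A)}_b); and (ii) if A is disconnected, η^{(A)}(i*_A | i_{pre(T)}) = 0 for all i*_A and all i_{pre(T)}. -/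

import Mathlib

open scoped Classical BigOperators

/-- A mixed graph on a node set `V`: a set of directed edges and a symmetric
irreflexive set of undirected edges, the two edge sets being disjoint. -/
structure MixedGraph (V : Type*) where
  dir : V → V → Prop
  undir : V → V → Prop
  undir_symm : ∀ {a b}, undir a b → undir b a
  undir_irrefl : ∀ a, ¬ undir a a
  edge_disjoint : ∀ a b, dir a b → ¬ undir a b

namespace MixedGraph

variable {V : Type*} [Fintype V] [DecidableEq V] (G : MixedGraph V)

/-- One step of a semi-directed path: an undirected edge or a directed edge
followed in the direction of traversal. -/
def step (a b : V) : Prop := G.dir a b ∨ G.undir a b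

/-- No semi-directed cycle: there is no directed edge `a → b` together with a
semi-directed path from `b` back to `a`. -/
def NoSemiDirectedCycle : Prop :=
  ∀ a b : V, G.dir a b → ¬ Relation.ReflTransGen G.step b a

/-- Two nodes are in the same chain component iff they are joined by a path of
undirected edges (the equivalence relation generated by the undirected part). -/
def sameComp (a b : V) : Prop := Relation.ReflTransGen G.undir a b

/-- The chain component of a node. -/
noncomputable def component (v : V) : Finset V :=
  Finset.univ.filter fun w => G.sameComp v w

/-- `T` is a chain component of `G`. -/
def IsComponent (T : Finset V) : Prop := ∃ v, T = G.component v

/-- The collection of chain components of `G`. -/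
noncomputable def componentsF : Finset (Finset V) :=
  Finset.univ.image fun v => G.component v

/-- The parents `pa_G(A)`: nodes outside `A` with a directed edge into `A`. -/
noncomputable def paG (A : Finset V) : Finset V :=
  Finset.univ.filter fun w => w ∉ A ∧ ∃ v ∈ A, G.dir w v

/-- The (inclusive) neighbours `Nb_G(A)`: `A` together with all nodes joined to
`A` by an undirected edge. -/
noncomputable def nbG (A : Finset V) : Finset V :=
  A ∪ Finset.univ.filter fun w => ∃ v ∈ A, G.undir v w

/-- The edge relation of the directed graph `D` of chain components:
`T₁ → T₂` iff they are distinct chain components and `G` has a directed edge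
from a node of `T₁` to a node of `T₂`. -/
def dirD (T₁ T₂ : Finset V) : Prop :=
  G.IsComponent T₁ ∧ G.IsComponent T₂ ∧ T₁ ≠ T₂ ∧ ∃ v ∈ T₁, ∃ w ∈ T₂, G.dir v w

/-- `pa_D(T)`: the union of the parent components of `T` in `D`. -/
noncomputable def paD (T : Finset V) : Finset V :=
  Finset.univ.filter fun w => G.dirD (G.component w) T

/-- `nd_D(T)`: the union of the components `T'` such that there is no directed
path from `T` to `T'` in `D`. -/
noncomputable def ndD (T : Finset V) : Finset V :=
  Finset.univ.filter fun w => ¬ Relation.ReflTransGen G.dirD T (G.component w)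

/-- A set of nodes `A` is connected if the subgraph of the undirected part of
`G` induced by `A` is connected (in particular nonempty). -/
def ConnectedIn (A : Finset V) : Prop :=
  A.Nonempty ∧ ∀ a ∈ A, ∀ b ∈ A,
    Relation.ReflTransGen (fun x y => x ∈ A ∧ y ∈ A ∧ G.undir x y) a b

/-- The connected component of `v` inside the induced subgraph on `A`. -/
noncomputable def compIn (A : Finset V) (v : V) : Finset V :=
  A.filter fun w =>
    Relation.ReflTransGen (fun x y => x ∈ A ∧ y ∈ A ∧ G.undir x y) v w

/-- The set of connected components of the induced subgraph on `A`. -/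
noncomputable def connComps (A : Finset V) : Finset (Finset V) :=
  A.image fun v => G.compIn A v

/-- `ord` is a strict total order of the chain components consistent with `G`:
`ord T T'` implies that `T` is not a parent component of `T'`. -/
def ConsistentOrder (ord : Finset V → Finset V → Prop) : Prop :=
  (∀ T₁ T₂, G.IsComponent T₁ → G.IsComponent T₂ → T₁ ≠ T₂ →
      ord T₁ T₂ ∨ ord T₂ T₁) ∧
  (∀ T, G.IsComponent T → ¬ ord T T) ∧
  (∀ T₁ T₂ T₃, G.IsComponent T₁ → G.IsComponent T₂ → G.IsComponent T₃ →
      ord T₁ T₂ → ord T₂ T₃ → ord T₁ T₃) ∧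
  (∀ T₁ T₂, G.IsComponent T₁ → G.IsComponent T₂ → ord T₁ T₂ → ¬ G.dirD T₁ T₂)

/-- `pre(T)`: the union of all the chain components `T'` with `T ≺ T'`
(the predecessors, i.e. the past, of `T`). -/
noncomputable def pre (ord : Finset V → Finset V → Prop) (T : Finset V) :
    Finset V :=
  Finset.univ.filter fun w => ord T (G.component w)

end MixedGraph

/-- A cell of the joint contingency table: variable `v` takes one of the
levels `0, …, r v - 1` (level `0` playing the role of the first level `1`). -/
abbrev Cell {V : Type*} (r : V → ℕ) := ∀ v : V, Fin (r v)

variable {V : Type*} [Fintype V] [DecidableEq V] {r : V → ℕ}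

/-- The marginal probability `p_S(i_S)` (as a function of a full cell `i`,
depending on it only through the coordinates in `S`). -/
noncomputable def marginal (p : Cell r → ℝ) (S : Finset V) (i : Cell r) : ℝ :=
  ∑ j : Cell r, if ∀ v ∈ S, j v = i v then p j else 0

/-- The conditional probability `p_{A|B}(i_A | i_B)`. -/
noncomputable def condProb (p : Cell r → ℝ) (A B : Finset V) (i : Cell r) : ℝ :=
  marginal p (A ∪ B) i / marginal p B i

/-- `p` is a strictly positive joint probability mass function. -/
def IsPosPMF (p : Cell r → ℝ) : Prop :=
  (∀ i, 0 < p i) ∧ ∑ i : Cell r, p i = 1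

/-- Conditional independence `A ⊥ B | C`. -/
def CondIndep (p : Cell r → ℝ) (A B C : Finset V) : Prop :=
  ∀ i : Cell r,
    marginal p (A ∪ B ∪ C) i * marginal p C i =
      marginal p (A ∪ C) i * marginal p (B ∪ C) i

/-- The cell agreeing with `i` on `S` and equal to the first (reference)
level outside `S`. -/
def splice (hr : ∀ v, 2 ≤ r v) (S : Finset V) (i : Cell r) : Cell r :=
  fun v => if v ∈ S then i v else ⟨0, by have := hr v; omega⟩

/-- The conditional multivariate logistic contrast
`η^{(A)}(i_A | i_B) = Σ_{s ⊆ A} (−1)^{|A∖s|} log p_{A|B}((i_s, 1_{A∖s}) | i_B)`. -/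
noncomputable def mlContrast (hr : ∀ v, 2 ≤ r v) (p : Cell r → ℝ)
    (A B : Finset V) (i : Cell r) : ℝ :=
  ∑ s ∈ A.powerset,
    (-1 : ℝ) ^ (A \ s).card * Real.log (condProb p A B (splice hr (s ∪ B) i))

/-- The multivariate regression (MR) Markov property for the chain graph `G`
with respect to the consistent ordering `ord`: for every chain component `T`
and every nonempty `A ⊆ T`, (MR1) if `A` is connected then
`A ⊥ (pre(T)∖pa_G(A)) | pa_G(A)`, and (MR2) if `A` is disconnected then its
connected components are mutually independent given `pre(T)`. -/
def MRMarkov (G : MixedGraph V) (ord : Finset V → Finset V → Prop)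
    (p : Cell r → ℝ) : Prop :=
  ∀ T : Finset V, G.IsComponent T → ∀ A ⊆ T, A.Nonempty →
    (G.ConnectedIn A →
      CondIndep p A (G.pre ord T \ G.paG A) (G.paG A)) ∧
    (¬ G.ConnectedIn A →
      ∀ i : Cell r,
        condProb p A (G.pre ord T) i =
          ∏ Aj ∈ G.connComps A, condProb p Aj (G.pre ord T) i)

/-- The block-recursive Markov property of type IV for the chain graph `G`:
(IV0) `T ⊥ (nd_D(T)∖pa_D(T)) | pa_D(T)`;
(IV1) `A ⊥ (pa_D(T)∖pa_G(A)) | pa_G(A)` for all `A ⊆ T`;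
(IV2) `A ⊥ (T∖Nb_G(A)) | pa_D(T)` for all connected `A ⊆ T`. -/
def TypeIVMarkov (G : MixedGraph V) (p : Cell r → ℝ) : Prop :=
  (∀ T : Finset V, G.IsComponent T →
      CondIndep p T (G.ndD T \ G.paD T) (G.paD T)) ∧
  (∀ T : Finset V, G.IsComponent T → ∀ A ⊆ T,
      CondIndep p A (G.paD T \ G.paG A) (G.paG A)) ∧
  (∀ T : Finset V, G.IsComponent T → ∀ A ⊆ T, G.ConnectedIn A →
      CondIndep p A (T \ G.nbG A) (G.paD T))


section Helpers

variable {V : Type*} [Fintype V] [DecidableEq V] {r : V → ℕ}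

lemma aux_marginal_congr (p : Cell r → ℝ) (S : Finset V) (i j : Cell r)
    (h : ∀ v ∈ S, i v = j v) : marginal p S i = marginal p S j := by
  unfold marginal
  refine Finset.sum_congr rfl fun k _ => ?_
  have : (∀ v ∈ S, k v = i v) ↔ (∀ v ∈ S, k v = j v) := by
    constructor
    · intro H v hv; rw [H v hv, h v hv]
    · intro H v hv; rw [H v hv, h v hv]
  simp only [this]

lemma aux_marginal_pos (p : Cell r → ℝ) (hp : ∀ i, 0 < p i) (S : Finset V) (i : Cell r) :
    0 < marginal p S i := by
  unfold marginal
  refine Finset.sum_pos' ?_ ⟨i, Finset.mem_univ _, ?_⟩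
  · intro j _
    split_ifs
    · exact (hp j).le
    · exact le_rfl
  · simp [hp i]

lemma aux_marginal_sum (p : Cell r → ℝ) (S : Finset V) (v : V) (hv : v ∈ S) (i : Cell r) :
    ∑ x : Fin (r v), marginal p S (Function.update i v x) = marginal p (S.erase v) i := by
  unfold marginal
  rw [Finset.sum_comm]
  refine Finset.sum_congr rfl fun k _ => ?_
  have key : ∀ x : Fin (r v), (∀ w ∈ S, k w = Function.update i v x w) ↔
      (k v = x ∧ ∀ w ∈ S.erase v, k w = i w) := by
    intro x
    constructor
    · intro H
      refine ⟨by simpa using H v hv, fun w hw => ?_⟩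
      have := H w (Finset.mem_of_mem_erase hw)
      rwa [Function.update_of_ne (Finset.ne_of_mem_erase hw)] at this
    · rintro ⟨h1, h2⟩ w hw
      by_cases hwv : w = v
      · subst hwv; simpa using h1
      · rw [Function.update_of_ne hwv]
        exact h2 w (Finset.mem_erase.2 ⟨hwv, hw⟩)
  simp only [key]
  by_cases hc : ∀ w ∈ S.erase v, k w = i w
  · rw [if_pos hc, Finset.sum_eq_single (k v)]
    · rw [if_pos ⟨rfl, hc⟩]
    · intro x _ hx
      rw [if_neg fun h => hx h.1.symm]
    · exact fun h => absurd (Finset.mem_univ _) h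
  · rw [if_neg hc]
    exact Finset.sum_eq_zero fun x _ => if_neg fun h => hc h.2

lemma aux_cond_congr (p : Cell r → ℝ) (A B : Finset V) (i j : Cell r)
    (h : ∀ v ∈ A ∪ B, i v = j v) : condProb p A B i = condProb p A B j := by
  unfold condProb
  rw [aux_marginal_congr p (A ∪ B) i j h,
    aux_marginal_congr p B i j (fun v hv => h v (Finset.mem_union_right _ hv))]

lemma aux_cond_pos (p : Cell r → ℝ) (hp : ∀ i, 0 < p i) (A B : Finset V) (i : Cell r) :
    0 < condProb p A B i :=
  div_pos (aux_marginal_pos p hp _ _) (aux_marginal_pos p hp _ _)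

lemma aux_cond_empty (p : Cell r → ℝ) (hp : ∀ i, 0 < p i) (B : Finset V) (i : Cell r) :
    condProb p ∅ B i = 1 := by
  unfold condProb
  rw [Finset.empty_union]
  exact div_self (aux_marginal_pos p hp _ _).ne'

lemma aux_cond_sum (p : Cell r → ℝ) (A B : Finset V) (v : V) (hv : v ∈ A) (hB : v ∉ B)
    (i : Cell r) :
    ∑ x : Fin (r v), condProb p A B (Function.update i v x) = condProb p (A.erase v) B i := by
  unfold condProb
  have h1 : ∀ x : Fin (r v), marginal p B (Function.update i v x) = marginal p B i := by
    intro x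
    apply aux_marginal_congr
    intro w hw
    rw [Function.update_of_ne]
    rintro rfl; exact hB hw
  simp only [h1]
  rw [← Finset.sum_div, aux_marginal_sum p _ v (Finset.mem_union_left _ hv)]
  congr 2
  rw [Finset.erase_union_distrib, Finset.erase_eq_of_notMem hB]

/-- Alternating sums vanish when the summand ignores a coordinate. -/
lemma aux_alt_zero (A : Finset V) (v : V) (hv : v ∈ A) (H : Finset V → ℝ)
    (h : ∀ s ⊆ A, v ∉ s → H (insert v s) = H s) :
    ∑ s ∈ A.powerset, (-1 : ℝ) ^ (A \ s).card * H s = 0 := by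
  obtain ⟨A', hA', rfl⟩ : ∃ A', v ∉ A' ∧ insert v A' = A :=
    ⟨A.erase v, Finset.notMem_erase _ _, Finset.insert_erase hv⟩
  rw [Finset.sum_powerset_insert hA', ← Finset.sum_add_distrib]
  refine Finset.sum_eq_zero fun s hs => ?_
  have hs' : s ⊆ A' := Finset.mem_powerset.1 hs
  have hvs : v ∉ s := fun h => hA' (hs' h)
  rw [h s (hs'.trans (Finset.subset_insert _ _)) hvs]
  have e1 : insert v A' \ s = insert v (A' \ s) := Finset.insert_sdiff_of_notMem _ hvs
  have e2 : insert v A' \ insert v s = A' \ s := by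
    ext w
    simp only [Finset.mem_sdiff, Finset.mem_insert]
    constructor
    · rintro ⟨h1 | h1, h2⟩
      · exact absurd (Or.inl h1) h2
      · exact ⟨h1, fun h => h2 (Or.inr h)⟩
    · rintro ⟨h1, h2⟩
      refine ⟨Or.inr h1, ?_⟩
      rintro (rfl | h3)
      · exact hA' h1
      · exact h2 h3
  rw [e1, e2, Finset.card_insert_of_notMem (by simp [hA'])]
  ring

lemma aux_orth (v : V) (d h : Cell r → ℝ)
    (hd : ∀ i, ∑ x : Fin (r v), d (Function.update i v x) = 0)
    (hh : ∀ i x, h (Function.update i v x) = h i) :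
    ∑ i, d i * h i = 0 := by
  by_cases hr : IsEmpty (Cell r)
  · simp
  rw [not_isEmpty_iff] at hr
  obtain ⟨c⟩ := hr
  have h0 : ∑ i, ∑ x : Fin (r v), d (Function.update i v x) * h (Function.update i v x) = 0 := by
    refine Finset.sum_eq_zero fun i _ => ?_
    simp only [hh]
    rw [← Finset.sum_mul, hd, zero_mul]
  let e : (Cell r × Fin (r v)) ≃ (Cell r × Fin (r v)) :=
    { toFun := fun q => (Function.update q.1 v q.2, q.1 v)
      invFun := fun q => (Function.update q.1 v q.2, q.1 v)
      left_inv := fun q => by simp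
      right_inv := fun q => by simp }
  rw [← Fintype.sum_prod_type'
    (f := fun i x => d (Function.update i v x) * h (Function.update i v x))] at h0
  have h1 : ∑ q : Cell r × Fin (r v), d (Function.update q.1 v q.2) * h (Function.update q.1 v q.2)
      = ∑ q : Cell r × Fin (r v), d q.1 * h q.1 :=
    e.sum_comp (fun q => d q.1 * h q.1)
  rw [h1, Fintype.sum_prod_type] at h0
  simp only [Finset.sum_const, Finset.card_univ, Fintype.card_fin, nsmul_eq_mul] at h0
  rw [← Finset.mul_sum] at h0
  have : (r v : ℝ) ≠ 0 := by
    have := (c v).pos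
    positivity
  exact (mul_eq_zero.1 h0).resolve_left this

lemma aux_log_mono (a b : ℝ) (ha : 0 < a) (hb : 0 < b) :
    0 ≤ (a - b) * (Real.log a - Real.log b) := by
  rcases le_total a b with h | h
  · exact mul_nonneg_of_nonpos_of_nonpos (by linarith)
      (by linarith [Real.log_le_log ha h])
  · exact mul_nonneg (by linarith) (by linarith [Real.log_le_log hb h])

/-- Uniqueness: equal one-step marginals and equal top contrast imply equality. -/
lemma aux_unique (hr : ∀ v, 2 ≤ r v) (A : Finset V) (f g : Cell r → ℝ)
    (hf : ∀ i, 0 < f i) (hg : ∀ i, 0 < g i)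
    (hfA : ∀ i, f (splice hr A i) = f i) (hgA : ∀ i, g (splice hr A i) = g i)
    (hm : ∀ v ∈ A, ∀ i, ∑ x : Fin (r v), f (Function.update i v x) =
      ∑ x : Fin (r v), g (Function.update i v x))
    (hc : ∀ i : Cell r, (∀ v ∈ A, (i v : ℕ) ≠ 0) →
      ∑ s ∈ A.powerset, (-1 : ℝ) ^ (A \ s).card * Real.log (f (splice hr s i)) =
      ∑ s ∈ A.powerset, (-1 : ℝ) ^ (A \ s).card * Real.log (g (splice hr s i)))
    (i : Cell r) : f i = g i := by
  set L : Cell r → ℝ := fun i => Real.log (f i) - Real.log (g i) with hL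
  have hcz : ∀ i : Cell r, ∑ s ∈ A.powerset, (-1 : ℝ) ^ (A \ s).card * L (splice hr s i) = 0 := by
    intro i
    by_cases hi : ∀ v ∈ A, (i v : ℕ) ≠ 0
    · have := hc i hi
      simp only [hL, mul_sub, Finset.sum_sub_distrib]
      linarith
    · push Not at hi
      obtain ⟨v, hv, hv0⟩ := hi
      refine aux_alt_zero A v hv (fun s => L (splice hr s i)) ?_
      intro s _ hvs
      have : splice hr (insert v s) i = splice hr s i := by
        funext w
        unfold splice
        by_cases hw : w = v
        · subst hw
          simp only [Finset.mem_insert_self, if_true, hvs, if_false]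
          exact Fin.ext hv0
        · simp [Finset.mem_insert, hw]
      simp only [this]
  have hLi : ∀ i, L i = - ∑ s ∈ A.powerset.erase A,
      (-1 : ℝ) ^ (A \ s).card * L (splice hr s i) := by
    intro i
    have := hcz i
    rw [← Finset.add_sum_erase _ _ (Finset.mem_powerset_self A)] at this
    have hLA : L (splice hr A i) = L i := by simp only [hL, hfA, hgA]
    simp only [Finset.sdiff_self, Finset.card_empty, pow_zero, one_mul, hLA] at this
    linarith
  have hsum : ∑ i, (f i - g i) * L i = 0 := by
    have : ∀ i, (f i - g i) * L i = - ∑ s ∈ A.powerset.erase A,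
        (-1 : ℝ) ^ (A \ s).card * ((f i - g i) * L (splice hr s i)) := by
      intro i
      rw [hLi i, mul_neg, Finset.mul_sum]
      congr 1
      refine Finset.sum_congr rfl fun s _ => by ring
    simp only [this]
    rw [Finset.sum_neg_distrib, Finset.sum_comm, neg_eq_zero]
    refine Finset.sum_eq_zero fun s hs => ?_
    rw [← Finset.mul_sum]
    rw [Finset.mem_erase, Finset.mem_powerset] at hs
    obtain ⟨v, hvA, hvs⟩ := Finset.exists_of_ssubset (hs.2.ssubset_of_ne hs.1)
    rw [aux_orth v (fun i => f i - g i) (fun i => L (splice hr s i)), mul_zero]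
    · intro i
      rw [Finset.sum_sub_distrib, hm v hvA, sub_self]
    · intro i x
      have : splice hr s (Function.update i v x) = splice hr s i := by
        funext w
        unfold splice
        by_cases hw : w ∈ s
        · have : w ≠ v := by rintro rfl; exact hvs hw
          simp [hw, this]
        · simp [hw]
      simp only [this]
  rw [Finset.sum_eq_zero_iff_of_nonneg
    (fun i _ => aux_log_mono _ _ (hf i) (hg i))] at hsum
  have := hsum i (Finset.mem_univ _)
  rcases mul_eq_zero.1 this with h | h
  · linarith
  · exact Real.log_injOn_pos (hf i) (hg i) (sub_eq_zero.1 h)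

/-- The conditional version of `aux_unique` on cells. -/
lemma aux_unique_cond (hr : ∀ v, 2 ≤ r v) (A B : Finset V) (hAB : Disjoint A B)
    (f g : Cell r → ℝ) (hf : ∀ i, 0 < f i) (hg : ∀ i, 0 < g i)
    (hfA : ∀ i j : Cell r, (∀ v ∈ A ∪ B, i v = j v) → f i = f j)
    (hgA : ∀ i j : Cell r, (∀ v ∈ A ∪ B, i v = j v) → g i = g j)
    (b b' : Cell r)
    (hm : ∀ v ∈ A, ∀ i, ∑ x : Fin (r v), f (Function.update (A.piecewise i b) v x) =
      ∑ x : Fin (r v), g (Function.update (A.piecewise i b') v x))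
    (hc : ∀ i : Cell r, (∀ v ∈ A, (i v : ℕ) ≠ 0) →
      ∑ s ∈ A.powerset, (-1 : ℝ) ^ (A \ s).card *
        Real.log (f (splice hr (s ∪ B) (A.piecewise i b))) =
      ∑ s ∈ A.powerset, (-1 : ℝ) ^ (A \ s).card *
        Real.log (g (splice hr (s ∪ B) (A.piecewise i b'))))
    (i : Cell r) : f (A.piecewise i b) = g (A.piecewise i b') := by
  have hnB : ∀ v ∈ A, v ∉ B := fun v hv hB => (Finset.disjoint_left.1 hAB hv hB)
  have hupd : ∀ v ∈ A, ∀ (i b : Cell r) (x : Fin (r v)),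
      A.piecewise (Function.update i v x) b = Function.update (A.piecewise i b) v x := by
    intro v hv i b x
    funext w
    by_cases hw : w = v
    · subst hw; simp [hv]
    · by_cases hwA : w ∈ A <;> simp [hw, hwA]
  have hspl : ∀ (i b : Cell r), A.piecewise (splice hr A i) b = A.piecewise i b := by
    intro i b
    funext w
    by_cases hwA : w ∈ A <;> simp [hwA, splice]
  have hag : ∀ s ⊆ A, ∀ i b : Cell r, ∀ v ∈ A ∪ B,
      splice hr (s ∪ B) (A.piecewise i b) v = A.piecewise (splice hr s i) b v := by
    intro s hs i b v hv
    by_cases hvA : v ∈ A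
    · simp [splice, hvA, hnB v hvA]
    · have hvB : v ∈ B := (Finset.mem_union.1 hv).resolve_left hvA
      simp [splice, hvA, hvB]
  refine aux_unique hr A (fun i => f (A.piecewise i b)) (fun i => g (A.piecewise i b'))
    (fun _ => hf _) (fun _ => hg _) (fun i => by simp only [hspl]) (fun i => by simp only [hspl])
    ?_ ?_ i
  · intro v hv i
    simp only [hupd v hv]
    exact hm v hv i
  · intro i hi
    have := hc i hi
    convert this using 1
    · refine Finset.sum_congr rfl fun s hs => ?_
      rw [hfA _ _ (hag s (Finset.mem_powerset.1 hs) i b)]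
    · refine Finset.sum_congr rfl fun s hs => ?_
      rw [hgA _ _ (hag s (Finset.mem_powerset.1 hs) i b')]

/-- Contrast of a function not involving `v` vanishes. -/
lemma aux_contrast_zero (hr : ∀ v, 2 ≤ r v) (p : Cell r → ℝ) (A B C : Finset V) (v : V)
    (hv : v ∈ A) (hC : v ∉ C) (hB : v ∉ B) (i : Cell r) :
    ∑ s ∈ A.powerset, (-1 : ℝ) ^ (A \ s).card *
      Real.log (condProb p C B (splice hr (s ∪ B) i)) = 0 := by
  refine aux_alt_zero A v hv (fun s => Real.log (condProb p C B (splice hr (s ∪ B) i))) ?_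
  intro s _ _
  rw [aux_cond_congr]
  intro w hw
  have : w ≠ v := by
    rintro rfl
    rcases Finset.mem_union.1 hw with h | h
    · exact hC h
    · exact hB h
  simp [splice, this]

/-- CondIndep in terms of dependence of conditional probabilities. -/
lemma aux_condIndep_iff (p : Cell r → ℝ) (hp : ∀ i, 0 < p i) (A B P : Finset V)
    (hPB : P ⊆ B) (hAB : Disjoint A B) :
    CondIndep p A (B \ P) P ↔
      ∀ i j : Cell r, (∀ v ∈ A, i v = j v) → (∀ v ∈ P, i v = j v) →
        condProb p A B i = condProb p A B j := by
  have e1 : A ∪ (B \ P) ∪ P = A ∪ B := by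
    rw [Finset.union_assoc, Finset.sdiff_union_of_subset hPB]
  have e2 : (B \ P) ∪ P = B := Finset.sdiff_union_of_subset hPB
  unfold CondIndep
  rw [e1, e2]
  constructor
  · intro H i j hA hP
    have key : ∀ i, condProb p A B i = condProb p A P i := by
      intro i
      unfold condProb
      rw [div_eq_div_iff (aux_marginal_pos p hp _ _).ne' (aux_marginal_pos p hp _ _).ne']
      exact H i
    rw [key, key]
    apply aux_cond_congr
    intro v hv
    exact (Finset.mem_union.1 hv).elim (hA v) (hP v)
  · intro H
    have key : ∀ D : Finset V, D ⊆ B \ P → ∀ i,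
        marginal p (A ∪ (B \ D)) i = condProb p A B i * marginal p (B \ D) i := by
      intro D
      induction D using Finset.induction_on with
      | empty =>
        intro _ i
        simp only [Finset.sdiff_empty]
        unfold condProb
        rw [div_mul_cancel₀ _ (aux_marginal_pos p hp _ _).ne']
      | insert v D hvD ih =>
        intro hD i
        have hv := Finset.mem_sdiff.1 (hD (Finset.mem_insert_self v D))
        have hvA : v ∉ A := fun h => Finset.disjoint_left.1 hAB h hv.1
        have hvBD : v ∈ B \ D := Finset.mem_sdiff.2 ⟨hv.1, hvD⟩
        have e3 : B \ insert v D = (B \ D).erase v := by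
          ext w; simp only [Finset.mem_sdiff, Finset.mem_insert, Finset.mem_erase]; tauto
        have e4 : A ∪ (B \ D).erase v = (A ∪ (B \ D)).erase v := by
          rw [Finset.erase_union_distrib, Finset.erase_eq_of_notMem hvA]
        rw [e3, e4, ← aux_marginal_sum p _ v (Finset.mem_union_right _ hvBD),
          ← aux_marginal_sum p _ v hvBD, Finset.mul_sum]
        refine Finset.sum_congr rfl fun x _ => ?_
        rw [ih ((Finset.subset_insert _ _).trans hD)]
        congr 1
        apply H
        · intro w hw
          rw [Function.update_of_ne]; rintro rfl; exact hvA hw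
        · intro w hw
          rw [Function.update_of_ne]; rintro rfl; exact hv.2 hw
    intro i
    have h1 := key (B \ P) (le_refl _) i
    rw [Finset.sdiff_sdiff_eq_self hPB] at h1
    rw [h1]
    unfold condProb
    field_simp [(aux_marginal_pos p hp B i).ne']

/-- Contrasts of `p` written for product functions. -/
lemma aux_factor (hr : ∀ v, 2 ≤ r v) (p : Cell r → ℝ) (hp : ∀ i, 0 < p i)
    (G : MixedGraph V) (T B : Finset V) (hTB : Disjoint T B)
    (H : ∀ A ⊆ T, A.Nonempty → ¬ G.ConnectedIn A → ∀ i : Cell r, (∀ v ∈ A, (i v : ℕ) ≠ 0) →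
      mlContrast hr p A B i = 0) :
    ∀ (n : ℕ) (U W : Finset V), (U ∪ W).card = n → U ∪ W ⊆ T → Disjoint U W →
      (∀ u ∈ U, ∀ w ∈ W, ¬ G.undir u w) →
      ∀ i, condProb p (U ∪ W) B i = condProb p U B i * condProb p W B i := by
  intro n
  induction n using Nat.strong_induction_on with
  | _ n ih =>
  intro U W hn hT hUW hsep i
  rcases U.eq_empty_or_nonempty with rfl | hU
  · rw [Finset.empty_union, aux_cond_empty p hp, one_mul]
  rcases W.eq_empty_or_nonempty with rfl | hW
  · rw [Finset.union_empty, aux_cond_empty p hp, mul_one]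
  have hAB : Disjoint (U ∪ W) B := Finset.disjoint_of_subset_left hT hTB
  have hnB : ∀ v ∈ U ∪ W, v ∉ B := fun v hv => Finset.disjoint_left.1 hAB hv
  have hnc : ¬ G.ConnectedIn (U ∪ W) := by
    rintro ⟨_, hc⟩
    obtain ⟨u, hu⟩ := hU
    obtain ⟨w, hw⟩ := hW
    have hpath := hc u (Finset.mem_union_left _ hu) w (Finset.mem_union_right _ hw)
    have : w ∈ U := by
      clear hw
      induction hpath with
      | refl => exact hu
      | tail _ h ih2 =>
        rcases Finset.mem_union.1 h.2.1 with h' | h'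
        · exact h'
        · exact absurd h.2.2 (hsep _ ih2 _ h')
    exact Finset.disjoint_left.1 hUW this hw
  have hmain := aux_unique_cond hr (U ∪ W) B hAB (condProb p (U ∪ W) B)
    (fun i => condProb p U B i * condProb p W B i)
    (aux_cond_pos p hp _ _)
    (fun i => mul_pos (aux_cond_pos p hp _ _ _) (aux_cond_pos p hp _ _ _))
    (aux_cond_congr p _ _)
    (fun i j h => by
      rw [aux_cond_congr p U B i j, aux_cond_congr p W B i j]
      · intro v hv; apply h; simp only [Finset.mem_union] at hv ⊢; tauto
      · intro v hv; apply h; simp only [Finset.mem_union] at hv ⊢; tauto)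
    i i ?_ ?_ i
  · have e : (U ∪ W).piecewise i i = i := by
      funext v; by_cases hv : v ∈ U ∪ W <;> simp [Finset.piecewise]
    rw [e] at hmain
    exact hmain
  · intro v hv j
    generalize (U ∪ W).piecewise j i = k
    rw [aux_cond_sum p _ B v hv (hnB v hv)]
    have hcard : ((U ∪ W).erase v).card < n := hn ▸ Finset.card_erase_lt_of_mem hv
    have haux : ∀ C : Finset V, v ∉ C → ∀ x : Fin (r v),
        condProb p C B (Function.update k v x) = condProb p C B k := by
      intro C hC x
      apply aux_cond_congr
      intro w hw
      rw [Function.update_of_ne]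
      rintro rfl
      exact (Finset.mem_union.1 hw).elim hC (hnB w hv)
    rcases Finset.mem_union.1 hv with hvU | hvW
    · have hvW : v ∉ W := Finset.disjoint_left.1 hUW hvU
      have e : (U ∪ W).erase v = U.erase v ∪ W := by
        rw [Finset.erase_union_distrib, Finset.erase_eq_of_notMem hvW]
      simp only [haux W hvW]
      rw [← Finset.sum_mul, aux_cond_sum p U B v hvU (hnB v hv), e]
      rw [e] at hcard
      refine ih _ hcard _ _ rfl ?_ ?_ ?_ k
      · rw [← e]; exact (Finset.erase_subset _ _).trans hT
      · exact Finset.disjoint_of_subset_left (Finset.erase_subset _ _) hUW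
      · exact fun u hu w hw => hsep u (Finset.mem_of_mem_erase hu) w hw
    · have hvU : v ∉ U := Finset.disjoint_right.1 hUW hvW
      have e : (U ∪ W).erase v = U ∪ W.erase v := by
        rw [Finset.erase_union_distrib, Finset.erase_eq_of_notMem hvU]
      simp only [haux U hvU]
      rw [← Finset.mul_sum, aux_cond_sum p W B v hvW (hnB v hv), e]
      rw [e] at hcard
      refine ih _ hcard _ _ rfl ?_ ?_ ?_ k
      · rw [← e]; exact (Finset.erase_subset _ _).trans hT
      · exact Finset.disjoint_of_subset_right (Finset.erase_subset _ _) hUW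
      · exact fun u hu w hw => hsep u hu w (Finset.mem_of_mem_erase hw)
  · intro j hj
    have h1 := H (U ∪ W) hT (hU.mono Finset.subset_union_left) hnc ((U ∪ W).piecewise j i)
      (fun v hv => by rw [Finset.piecewise_eq_of_mem _ _ _ hv]; exact hj v hv)
    unfold mlContrast at h1
    rw [h1]
    have hl : ∀ k, Real.log (condProb p U B k * condProb p W B k) =
        Real.log (condProb p U B k) + Real.log (condProb p W B k) := fun k =>
      Real.log_mul (aux_cond_pos p hp _ _ _).ne' (aux_cond_pos p hp _ _ _).ne'
    simp only [hl, mul_add, Finset.sum_add_distrib]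
    obtain ⟨u, hu⟩ := hU
    obtain ⟨w, hw⟩ := hW
    rw [aux_contrast_zero hr p (U ∪ W) B U w (Finset.mem_union_right _ hw)
        (Finset.disjoint_right.1 hUW hw) (hnB w (Finset.mem_union_right _ hw)),
      aux_contrast_zero hr p (U ∪ W) B W u (Finset.mem_union_left _ hu)
        (Finset.disjoint_left.1 hUW hu) (hnB u (Finset.mem_union_left _ hu)), add_zero]

lemma aux_path_symm (G : MixedGraph V) (A : Finset V) (a b : V)
    (h : Relation.ReflTransGen (fun x y => x ∈ A ∧ y ∈ A ∧ G.undir x y) a b) :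
    Relation.ReflTransGen (fun x y => x ∈ A ∧ y ∈ A ∧ G.undir x y) b a := by
  induction h with
  | refl => exact .refl
  | tail _ h ih => exact .head ⟨h.2.1, h.1, G.undir_symm h.2.2⟩ ih

lemma aux_comp_sep (G : MixedGraph V) (A C D : Finset V) (hC : C ∈ G.connComps A)
    (hD : D ∈ G.connComps A) (u w : V) (hu : u ∈ C) (hw : w ∈ D)
    (h : u = w ∨ G.undir u w) : C = D := by
  unfold MixedGraph.connComps at hC hD
  obtain ⟨c, hc, rfl⟩ := Finset.mem_image.1 hC
  obtain ⟨d, hd, rfl⟩ := Finset.mem_image.1 hD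
  unfold MixedGraph.compIn at hu hw ⊢
  rw [Finset.mem_filter] at hu hw
  have huw : Relation.ReflTransGen (fun x y => x ∈ A ∧ y ∈ A ∧ G.undir x y) u w := by
    rcases h with rfl | h
    · exact .refl
    · exact .single ⟨hu.1, hw.1, h⟩
  have hcd := (hu.2.trans huw).trans (aux_path_symm G A _ _ hw.2)
  ext x
  simp only [Finset.mem_filter]
  constructor
  · rintro ⟨hx, hp⟩; exact ⟨hx, (aux_path_symm G A _ _ hcd).trans hp⟩
  · rintro ⟨hx, hp⟩; exact ⟨hx, hcd.trans hp⟩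

lemma aux_biUnion_comps (G : MixedGraph V) (A : Finset V) :
    (G.connComps A).biUnion id = A := by
  ext x
  simp only [Finset.mem_biUnion, id]
  unfold MixedGraph.connComps MixedGraph.compIn
  constructor
  · rintro ⟨C, hC, hx⟩
    obtain ⟨c, hc, rfl⟩ := Finset.mem_image.1 hC
    exact (Finset.mem_filter.1 hx).1
  · intro hx
    exact ⟨_, Finset.mem_image_of_mem _ hx, Finset.mem_filter.2 ⟨hx, .refl⟩⟩

lemma aux_prod_comps (p : Cell r → ℝ) (hp : ∀ i, 0 < p i)
    (G : MixedGraph V) (T B A : Finset V) (hA : A ⊆ T)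
    (H : ∀ (U W : Finset V), U ∪ W ⊆ T → Disjoint U W →
      (∀ u ∈ U, ∀ w ∈ W, ¬ G.undir u w) →
      ∀ i, condProb p (U ∪ W) B i = condProb p U B i * condProb p W B i) (i : Cell r) :
    condProb p A B i = ∏ C ∈ G.connComps A, condProb p C B i := by
  have key : ∀ S : Finset (Finset V), S ⊆ G.connComps A →
      condProb p (S.biUnion id) B i = ∏ C ∈ S, condProb p C B i := by
    intro S
    induction S using Finset.induction_on with
    | empty => intro _; simp [aux_cond_empty p hp]
    | insert C S hCS ih =>
      intro hS
      have hCm := hS (Finset.mem_insert_self C S)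
      have hsep : ∀ u ∈ C, ∀ w ∈ S.biUnion id, ¬ (u = w ∨ G.undir u w) := by
        intro u hu w hw h
        obtain ⟨D, hD, hwD⟩ := Finset.mem_biUnion.1 hw
        have := aux_comp_sep G A C D hCm (hS (Finset.mem_insert_of_mem hD)) u w hu hwD h
        exact hCS (this ▸ hD)
      rw [Finset.prod_insert hCS, ← ih ((Finset.subset_insert _ _).trans hS),
        Finset.biUnion_insert]
      refine H _ _ ?_ ?_ ?_ i
      · have h2 : (insert C S).biUnion id ⊆ (G.connComps A).biUnion id :=
          Finset.biUnion_subset_biUnion_of_subset_left _ hS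
        rw [aux_biUnion_comps, Finset.biUnion_insert] at h2
        exact h2.trans hA
      · rw [Finset.disjoint_left]
        intro u hu hu'
        exact hsep u hu u hu' (Or.inl rfl)
      · exact fun u hu w hw h => hsep u hu w hw (Or.inr h)
  have := key _ (le_refl _)
  rwa [aux_biUnion_comps] at this

lemma aux_comp_eq (G : MixedGraph V) (v w : V) (h : G.sameComp v w) :
    G.component v = G.component w := by
  have hs : ∀ a b, G.sameComp a b → G.sameComp b a := by
    intro a b hab
    unfold MixedGraph.sameComp at *
    induction hab with
    | refl => exact .refl
    | tail _ h ih => exact .head (G.undir_symm h) ih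
  ext x
  unfold MixedGraph.component
  simp only [Finset.mem_filter, Finset.mem_univ, true_and]
  exact ⟨fun hx => (hs _ _ h).trans hx, fun hx => Relation.ReflTransGen.trans h hx⟩

lemma aux_self_comp (G : MixedGraph V) (v : V) : v ∈ G.component v := by
  unfold MixedGraph.component
  exact Finset.mem_filter.2 ⟨Finset.mem_univ _, .refl⟩

lemma aux_mem_comp (G : MixedGraph V) (T : Finset V) (hT : G.IsComponent T) (w : V)
    (hw : w ∈ T) : G.component w = T := by
  obtain ⟨v, rfl⟩ := hT
  unfold MixedGraph.component at hw
  exact (aux_comp_eq G v w (Finset.mem_filter.1 hw).2).symm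

lemma aux_not_dir (G : MixedGraph V) (hG : G.NoSemiDirectedCycle) (T : Finset V)
    (hT : G.IsComponent T) (w v : V) (hw : w ∈ T) (hv : v ∈ T) : ¬ G.dir w v := by
  intro h
  refine hG w v h ?_
  have : w ∈ G.component v := by rw [aux_mem_comp G T hT v hv]; exact hw
  unfold MixedGraph.component at this
  exact Relation.ReflTransGen.mono (p := G.step) (fun a b hab => Or.inr hab) _ _
    (Finset.mem_filter.1 this).2

lemma aux_pa_pre (G : MixedGraph V) (hG : G.NoSemiDirectedCycle)
    (ord : Finset V → Finset V → Prop) (hord : G.ConsistentOrder ord)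
    (T : Finset V) (hT : G.IsComponent T) (A : Finset V) (hA : A ⊆ T) :
    G.paG A ⊆ G.pre ord T := by
  intro w hw
  unfold MixedGraph.paG at hw
  obtain ⟨_, _, v, hv, hwv⟩ := Finset.mem_filter.1 hw
  unfold MixedGraph.pre
  refine Finset.mem_filter.2 ⟨Finset.mem_univ _, ?_⟩
  have hne : T ≠ G.component w := by
    intro h
    exact aux_not_dir G hG T hT w v (h ▸ aux_self_comp G w) (hA hv) hwv
  have hcw : G.IsComponent (G.component w) := ⟨w, rfl⟩
  rcases hord.1 T _ hT hcw hne with h | h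
  · exact h
  · exact absurd ⟨hcw, hT, hne.symm, w, aux_self_comp G w, v, hA hv, hwv⟩
      (hord.2.2.2 _ _ hcw hT h)

lemma aux_T_pre (G : MixedGraph V) (ord : Finset V → Finset V → Prop)
    (hord : G.ConsistentOrder ord) (T : Finset V) (hT : G.IsComponent T) :
    Disjoint T (G.pre ord T) := by
  rw [Finset.disjoint_left]
  intro w hw hp
  unfold MixedGraph.pre at hp
  have := (Finset.mem_filter.1 hp).2
  rw [aux_mem_comp G T hT w hw] at this
  exact hord.2.1 T hT this

lemma aux_pa_mono (G : MixedGraph V) (hG : G.NoSemiDirectedCycle)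
    (T : Finset V) (hT : G.IsComponent T) (A A' : Finset V) (hA : A ⊆ T) (h : A' ⊆ A) :
    G.paG A' ⊆ G.paG A := by
  intro w hw
  unfold MixedGraph.paG at hw ⊢
  obtain ⟨_, _, v, hv, hwv⟩ := Finset.mem_filter.1 hw
  refine Finset.mem_filter.2 ⟨Finset.mem_univ _, ?_, v, h hv, hwv⟩
  exact fun hwA => aux_not_dir G hG T hT w v (hA hwA) (hA (h hv)) hwv

/-- Equal contrasts force dependence only through the parents. -/
lemma aux_dep (hr : ∀ v, 2 ≤ r v) (p : Cell r → ℝ) (hp : ∀ i, 0 < p i)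
    (G : MixedGraph V) (hG : G.NoSemiDirectedCycle) (T B : Finset V) (hT : G.IsComponent T)
    (hTB : Disjoint T B)
    (H : ∀ A ⊆ T, A.Nonempty → ∀ i j : Cell r, (∀ v ∈ A, (i v : ℕ) ≠ 0) →
      (∀ v ∈ A, i v = j v) → (∀ v ∈ G.paG A, i v = j v) →
      mlContrast hr p A B i = mlContrast hr p A B j) :
    ∀ (n : ℕ) (A : Finset V), A.card = n → A ⊆ T →
      ∀ i j : Cell r, (∀ v ∈ A, i v = j v) → (∀ v ∈ G.paG A, i v = j v) →
        condProb p A B i = condProb p A B j := by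
  intro n
  induction n using Nat.strong_induction_on with
  | _ n ih =>
  intro A hn hA i j hij hpa
  rcases A.eq_empty_or_nonempty with rfl | hne
  · rw [aux_cond_empty p hp, aux_cond_empty p hp]
  have hAB : Disjoint A B := Finset.disjoint_of_subset_left hA hTB
  have hnB : ∀ v ∈ A, v ∉ B := fun v hv => Finset.disjoint_left.1 hAB hv
  have hpaA : ∀ v ∈ G.paG A, v ∉ A := by
    intro v hv
    unfold MixedGraph.paG at hv
    exact (Finset.mem_filter.1 hv).2.1
  have agA : ∀ k : Cell r, ∀ v ∈ A, A.piecewise k i v = A.piecewise k j v := by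
    intro k v hv; simp [hv]
  have agP : ∀ k : Cell r, ∀ v ∈ G.paG A, A.piecewise k i v = A.piecewise k j v := by
    intro k v hv; simp [hpaA v hv, hpa v hv]
  have hmain := aux_unique_cond hr A B hAB (condProb p A B) (condProb p A B)
    (aux_cond_pos p hp _ _) (aux_cond_pos p hp _ _)
    (aux_cond_congr p _ _) (aux_cond_congr p _ _) i j ?_ ?_ i
  · have e : A.piecewise i j = j := by
      funext v
      by_cases hv : v ∈ A
      · simp [hv, hij v hv]
      · simp [hv]
    have e' : A.piecewise i i = i := by
      funext v; simp [Finset.piecewise]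
    rw [e, e'] at hmain
    exact hmain
  · intro v hv k
    rw [aux_cond_sum p _ B v hv (hnB v hv), aux_cond_sum p _ B v hv (hnB v hv)]
    refine ih _ (hn ▸ Finset.card_erase_lt_of_mem hv) _ rfl
      ((Finset.erase_subset _ _).trans hA) _ _ ?_ ?_
    · exact fun w hw => agA k w (Finset.mem_of_mem_erase hw)
    · exact fun w hw => agP k w (aux_pa_mono G hG T hT A _ hA (Finset.erase_subset _ _) hw)
  · intro k hk
    exact H A hA hne _ _ (fun v hv => by rw [Finset.piecewise_eq_of_mem _ _ _ hv]; exact hk v hv)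
      (agA k) (agP k)

end Helpers

/-- Theorem 2: a strictly positive joint pmf obeys the
multivariate regression Markov property for `G` iff for every chain component
`T` and nonempty `A ⊆ T`: (i) if `A` is connected, the conditional
multivariate logistic contrast `η^{(A)}(i*_A | i_{pre(T)})` depends on
`i_{pre(T)}` only through `i_{pa_G(A)}`; (ii) if `A` is disconnected,
`η^{(A)}(i*_A | i_{pre(T)}) = 0`. -/
theorem mr_markov_iff_mlContrast
    {V : Type*} [Fintype V] [DecidableEq V] {r : V → ℕ} (hr : ∀ v, 2 ≤ r v)
    (G : MixedGraph V) (hG : G.NoSemiDirectedCycle)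
    (ord : Finset V → Finset V → Prop) (hord : G.ConsistentOrder ord)
    (p : Cell r → ℝ) (hp : IsPosPMF p) :
    MRMarkov G ord p ↔
      ∀ T : Finset V, G.IsComponent T → ∀ A ⊆ T, A.Nonempty →
        (G.ConnectedIn A →
          ∀ i j : Cell r, (∀ v ∈ A, (i v : ℕ) ≠ 0) →
            (∀ v ∈ A, i v = j v) → (∀ v ∈ G.paG A, i v = j v) →
            mlContrast hr p A (G.pre ord T) i =
              mlContrast hr p A (G.pre ord T) j) ∧
        (¬ G.ConnectedIn A →
          ∀ i : Cell r, (∀ v ∈ A, (i v : ℕ) ≠ 0) →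
            mlContrast hr p A (G.pre ord T) i = 0) := by
  constructor
  · intro hM T hT A hA hne
    have hAB : Disjoint A (G.pre ord T) :=
      Finset.disjoint_of_subset_left hA (aux_T_pre G ord hord T hT)
    obtain ⟨h1, h2⟩ := hM T hT A hA hne
    refine ⟨fun hc i j _ hij hpa => ?_, fun hc i _ => ?_⟩
    · have hD := (aux_condIndep_iff p hp.1 A _ _
        (aux_pa_pre G hG ord hord T hT A hA) hAB).1 (h1 hc)
      unfold mlContrast
      refine Finset.sum_congr rfl fun s _ => ?_
      rw [hD (splice hr (s ∪ G.pre ord T) i) (splice hr (s ∪ G.pre ord T) j)]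
      · intro v hv; simp only [splice, hij v hv]
      · intro v hv; simp only [splice, hpa v hv]
    · unfold mlContrast
      have h3 := h2 hc
      have hl : ∀ k, Real.log (condProb p A (G.pre ord T) k) =
          ∑ C ∈ G.connComps A, Real.log (condProb p C (G.pre ord T) k) := by
        intro k
        rw [h3 k, Real.log_prod (fun C _ => (aux_cond_pos p hp.1 _ _ _).ne')]
      simp only [hl, Finset.mul_sum]
      rw [Finset.sum_comm]
      refine Finset.sum_eq_zero fun C hC => ?_
      obtain ⟨v, hv, hvC⟩ : ∃ v ∈ A, v ∉ C := by
        by_contra hcon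
        push Not at hcon
        apply hc
        refine ⟨hne, fun a ha b hb => ?_⟩
        unfold MixedGraph.connComps at hC
        obtain ⟨c, _, rfl⟩ := Finset.mem_image.1 hC
        unfold MixedGraph.compIn at hcon
        exact (aux_path_symm G A _ _ (Finset.mem_filter.1 (hcon a ha)).2).trans
          (Finset.mem_filter.1 (hcon b hb)).2
      exact aux_contrast_zero hr p A _ C v hv hvC (Finset.disjoint_left.1 hAB hv) i
  · intro H T hT A hA hne
    have hTB := aux_T_pre G ord hord T hT
    have hAB : Disjoint A (G.pre ord T) := Finset.disjoint_of_subset_left hA hTB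
    refine ⟨fun _ => ?_, fun _ i => ?_⟩
    · refine (aux_condIndep_iff p hp.1 A _ _
        (aux_pa_pre G hG ord hord T hT A hA) hAB).2 ?_
      refine aux_dep hr p hp.1 G hG T _ hT hTB ?_ _ A rfl hA
      intro A' hA' hne' i j hi hij hpa
      by_cases hc : G.ConnectedIn A'
      · exact (H T hT A' hA' hne').1 hc i j hi hij hpa
      · rw [(H T hT A' hA' hne').2 hc i hi, (H T hT A' hA' hne').2 hc j
          (fun v hv => by rw [← hij v hv]; exact hi v hv)]
    · refine aux_prod_comps p hp.1 G T _ A hA ?_ i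
      intro U W hUW hd hs
      exact aux_factor hr p hp.1 G T _ hTB (fun A' hA' hne' hc => (H T hT A' hA' hne').2 hc)
        _ U W rfl hUW hd hs
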